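/- arXiv:2510.22259 — 4 statements merged into one kernel-verified Lean document; each statement's English description precedes it below -/
import Mathlib

section
/- Let s ≥ 3 be an integer and n = (2^{2s}+1)(2^s−1). Then: (i) the multiplicative order of 2 modulo n equals 4s; (ii) for every odd integer i with 1 ≤ i ≤ 2^s−1, the 2-cyclotomic coset C_i modulo n has cardinality 4s; and (iii) every such odd i is the coset leader of its 2-cyclotomic coset C_i. -/
open Finset

/-- The binary cyclic (BCH-type) code of length `n` over GF(2), consisting of all
words `c` such that `∑ i, c i • β ^ (j * i) = 0` for every `j` in the check set `J`. -/
def BCHCode {F : Type} [Field F] [Algebra (ZMod 2) F] (n : ℕ) (β : F) (J : Finset ℕ) :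
    Submodule (ZMod 2) (Fin n → ZMod 2) where
  carrier := {c | ∀ j ∈ J, ∑ i : Fin n, c i • β ^ (j * (i : ℕ)) = 0}
  add_mem' := by
    intro a b ha hb j hj
    simp only [Set.mem_setOf_eq, Pi.add_apply, add_smul, Finset.sum_add_distrib] at *
    rw [ha j hj, hb j hj, add_zero]
  zero_mem' := by
    intro j hj
    simp
  smul_mem' := by
    intro r c hc j hj
    simp only [Set.mem_setOf_eq, Pi.smul_apply, smul_assoc, ← Finset.smul_sum] at *
    rw [hc j hj, smul_zero]

/-- The (Euclidean) dual of a binary linear code. -/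
def dualCode {N : ℕ} (C : Submodule (ZMod 2) (Fin N → ZMod 2)) :
    Submodule (ZMod 2) (Fin N → ZMod 2) where
  carrier := {b | ∀ c ∈ C, ∑ i, b i * c i = 0}
  add_mem' := by
    intro a b ha hb c hc
    simp only [Set.mem_setOf_eq, Pi.add_apply, add_mul, Finset.sum_add_distrib] at *
    rw [ha c hc, hb c hc, add_zero]
  zero_mem' := by
    intro c hc
    simp
  smul_mem' := by
    intro r b hb c hc
    simp only [Set.mem_setOf_eq, Pi.smul_apply, smul_eq_mul, mul_assoc, ← Finset.mul_sum] at *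
    rw [hb c hc, mul_zero]

/-- The linear map appending an overall parity-check coordinate. -/
def extendMap (N : ℕ) : (Fin N → ZMod 2) →ₗ[ZMod 2] (Fin (N + 1) → ZMod 2) where
  toFun c := fun j => if h : (j : ℕ) < N then c ⟨j, h⟩ else ∑ i, c i
  map_add' a b := by
    funext j
    by_cases h : (j : ℕ) < N <;> simp [h, Finset.sum_add_distrib]
  map_smul' r c := by
    funext j
    by_cases h : (j : ℕ) < N <;> simp [h, Finset.mul_sum]

/-- The extended code of a binary linear code. -/
def extendedCode {N : ℕ} (C : Submodule (ZMod 2) (Fin N → ZMod 2)) :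
    Submodule (ZMod 2) (Fin (N + 1) → ZMod 2) :=
  C.map (extendMap N)

/-- The minimum distance (= minimum nonzero Hamming weight) of a binary linear code. -/
noncomputable def minDist {N : ℕ} (C : Submodule (ZMod 2) (Fin N → ZMod 2)) : ℕ :=
  sInf {w | ∃ c ∈ C, c ≠ 0 ∧ hammingNorm c = w}

/-- The number of codewords of Hamming weight `w` in a binary linear code. -/
noncomputable def weightCount {N : ℕ} (C : Submodule (ZMod 2) (Fin N → ZMod 2)) (w : ℕ) : ℕ :=
  Set.ncard {c : Fin N → ZMod 2 | c ∈ C ∧ hammingNorm c = w}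

/-- The 2-cyclotomic coset of `i` modulo `n`. -/
def cycCoset (n i : ℕ) : Set ℕ := {x | ∃ j : ℕ, x = i * 2 ^ j % n}

/-- The coset leader (smallest element) of the 2-cyclotomic coset of `i` modulo `n`. -/
noncomputable def cosetLeader (n i : ℕ) : ℕ := sInf (cycCoset n i)

/-!
Suppose `b ^ d ≡ 1 [MOD n]`, `b ∤ i` and `i * b ^ t < n` with `d ≤ 2 * t + 1`. For `0 < j ≤ t` the
product `i * b ^ j` is not reduced modulo `n`, so it exceeds `i`. For `t < j < d`, a residue `r ≤ i`
of `i * b ^ j` would satisfy `r * b ^ (d - j) ≡ i` with `d - j ≤ t`; both sides being smaller than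
`n`, they would be equal, against `b ∤ i`. So `i` is strictly smaller than the residues of
`i * b ^ j` for all `0 < j < d`, which gives the size and the leader of its coset, and, for `i = 1`,
the order of `b`. For `n = (2 ^ t + 1) * m` with `m ∣ 2 ^ t - 1`, this applies with `d = 2 * t` to
every odd `i ≤ m`; the theorem is the case `t = 2 * s`, `m = 2 ^ s - 1`.
-/

section Residues

variable {b n d t i : ℕ}

lemma mul_pow_mod_eq_mul_pow_mod_period (hpow : b ^ d ≡ 1 [MOD n]) (i j : ℕ) :
    i * b ^ j % n = i * b ^ (j % d) % n := by
  have hperiod : (b : ZMod n) ^ d = 1 := by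
    exact_mod_cast (ZMod.natCast_eq_natCast_iff _ _ _).2 hpow
  refine (ZMod.natCast_eq_natCast_iff _ _ _).1 ?_
  push_cast
  rw [pow_eq_pow_mod j hperiod]

lemma lt_mul_pow_mod (hb : 1 < b) (hpow : b ^ d ≡ 1 [MOD n]) (hdt : d ≤ 2 * t + 1)
    (hbi : ¬ b ∣ i) (hit : i * b ^ t < n) {j : ℕ} (hj : j ≠ 0) (hjd : j < d) :
    i < i * b ^ j % n := by
  have no_wrap {r k : ℕ} (hri : r ≤ i) (hkt : k ≤ t) : r * b ^ k < n :=
    (Nat.mul_le_mul hri (Nat.pow_le_pow_right (by omega) hkt)).trans_lt hit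
  rcases le_or_gt j t with hjt | htj
  · have hi : 0 < i := Nat.pos_of_ne_zero fun h => hbi (h ▸ dvd_zero b)
    rw [Nat.mod_eq_of_lt (no_wrap le_rfl hjt)]
    exact lt_mul_of_one_lt_right hi (Nat.one_lt_pow hj hb)
  · by_contra! hle
    have hmod : i * b ^ j % n * b ^ (d - j) ≡ i [MOD n] := by
      calc i * b ^ j % n * b ^ (d - j)
        _ ≡ i * b ^ j * b ^ (d - j) [MOD n] := (Nat.mod_modEq _ _).mul_right _
        _ = i * b ^ d := by rw [mul_assoc, pow_mul_pow_sub b hjd.le]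
        _ ≡ i [MOD n] := by simpa using hpow.mul_left i
    have heq : i * b ^ j % n * b ^ (d - j) = i :=
      hmod.eq_of_lt_of_lt (no_wrap hle (by omega)) (by simpa using no_wrap le_rfl t.zero_le)
    exact hbi (heq ▸ dvd_mul_of_dvd_right (dvd_pow_self b (by omega)) _)

lemma not_mul_pow_modEq_self (hb : 1 < b) (hpow : b ^ d ≡ 1 [MOD n]) (hdt : d ≤ 2 * t + 1)
    (hbi : ¬ b ∣ i) (hit : i * b ^ t < n) {j : ℕ} (hj : j ≠ 0) (hjd : j < d) :
    ¬ i * b ^ j ≡ i [MOD n] := fun hmod =>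
  ((lt_mul_pow_mod hb hpow hdt hbi hit hj hjd).trans_eq hmod).not_ge (Nat.mod_le i n)

lemma orderOf_natCast_eq_of_pow_modEq_one (hb : 1 < b) (hd : 0 < d)
    (hpow : b ^ d ≡ 1 [MOD n]) (hdt : d ≤ 2 * t + 1) (hbn : b ^ t < n) :
    orderOf (b : ZMod n) = d := by
  refine (orderOf_eq_iff hd).2 ⟨?_, fun j hjd hj hbj => ?_⟩
  · exact_mod_cast (ZMod.natCast_eq_natCast_iff _ _ _).2 hpow
  · have hmod : 1 * b ^ j ≡ 1 [MOD n] :=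
      (ZMod.natCast_eq_natCast_iff _ _ _).1 (by simpa using hbj)
    have hb_one : ¬ b ∣ 1 := by simpa using hb.ne'
    exact not_mul_pow_modEq_self hb hpow hdt hb_one (by rwa [one_mul]) hj.ne' hjd hmod

lemma injOn_mul_pow_mod (hb : 1 < b) (hpow : b ^ d ≡ 1 [MOD n]) (hdt : d ≤ 2 * t + 1)
    (hbi : ¬ b ∣ i) (hit : i * b ^ t < n) :
    Set.InjOn (fun j => i * b ^ j % n) (range d) := by
  intro j hj k hk hjk
  wlog hlt : j < k generalizing j k
  · exact (not_lt.1 hlt).eq_or_lt.elim Eq.symm fun hgt => (this hk hj hjk.symm hgt).symm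
  have hkd : k < d := mem_range.1 hk
  have hmod : i * b ^ (j + (d - k)) ≡ i [MOD n] := by
    calc i * b ^ (j + (d - k))
      _ = i * b ^ j * b ^ (d - k) := by rw [pow_add, mul_assoc]
      _ ≡ i * b ^ k * b ^ (d - k) [MOD n] := Nat.ModEq.mul_right _ hjk
      _ = i * b ^ d := by rw [mul_assoc, pow_mul_pow_sub b hkd.le]
      _ ≡ i [MOD n] := by simpa using hpow.mul_left i
  exact absurd hmod (not_mul_pow_modEq_self hb hpow hdt hbi hit (by omega) (by omega))

end Residues

section Cosets

variable {n d t i : ℕ}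

lemma cycCoset_eq_image_range (hd : 0 < d) (hpow : 2 ^ d ≡ 1 [MOD n]) (i : ℕ) :
    cycCoset n i = (range d).image fun j => i * 2 ^ j % n := by
  ext x
  simp only [cycCoset, Set.mem_ofPred_eq, coe_image, Set.mem_image, mem_coe, mem_range]
  constructor
  · rintro ⟨j, rfl⟩
    exact ⟨j % d, Nat.mod_lt j hd, (mul_pow_mod_eq_mul_pow_mod_period hpow i j).symm⟩
  · rintro ⟨j, -, rfl⟩
    exact ⟨j, rfl⟩

lemma ncard_cycCoset (hd : 0 < d) (hpow : 2 ^ d ≡ 1 [MOD n]) (hdt : d ≤ 2 * t + 1)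
    (hi : Odd i) (hit : i * 2 ^ t < n) : (cycCoset n i).ncard = d := by
  rw [cycCoset_eq_image_range hd hpow, Set.ncard_coe_finset,
    card_image_of_injOn (injOn_mul_pow_mod one_lt_two hpow hdt hi.not_two_dvd_nat hit), card_range]

lemma cosetLeader_eq_self (hd : 0 < d) (hpow : 2 ^ d ≡ 1 [MOD n]) (hdt : d ≤ 2 * t + 1)
    (hi : Odd i) (hit : i * 2 ^ t < n) : cosetLeader n i = i := by
  have hi_mod : i * 2 ^ 0 % n = i := by
    rw [pow_zero, mul_one]
    exact Nat.mod_eq_of_lt ((Nat.le_mul_of_pos_right i (by positivity)).trans_lt hit)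
  refine IsLeast.csInf_eq ⟨⟨0, hi_mod.symm⟩, ?_⟩
  rw [cycCoset_eq_image_range hd hpow]
  simp only [mem_lowerBounds, mem_coe, forall_mem_image, mem_range]
  intro j hjd
  obtain rfl | hj := eq_or_ne j 0
  · exact hi_mod.ge
  · exact (lt_mul_pow_mod one_lt_two hpow hdt hi.not_two_dvd_nat hit hj hjd).le

end Cosets

lemma pow_two_mul_modEq_one {b t m : ℕ} (hb : 0 < b) (hm : m ∣ b ^ t - 1) :
    b ^ (2 * t) ≡ 1 [MOD (b ^ t + 1) * m] := by
  have hfactor : b ^ (2 * t) - 1 = (b ^ t + 1) * (b ^ t - 1) := by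
    rw [mul_comm 2, pow_mul, ← Nat.sq_sub_sq, one_pow]
  refine ((Nat.modEq_iff_dvd' (Nat.one_le_pow _ _ hb)).2 ?_).symm
  exact hfactor ▸ Nat.mul_dvd_mul_left _ hm

theorem stmt_0_general {t m n : ℕ} (ht : 0 < t) (hm : m ∣ 2 ^ t - 1) (hn : n = (2 ^ t + 1) * m) :
    orderOf (2 : ZMod n) = 2 * t ∧
    ∀ i : ℕ, Odd i → i ≤ m → (cycCoset n i).ncard = 2 * t ∧ cosetLeader n i = i := by
  have hd : 0 < 2 * t := by omega
  have hpow : 2 ^ (2 * t) ≡ 1 [MOD n] := hn ▸ pow_two_mul_modEq_one two_pos hm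
  have hdt : 2 * t ≤ 2 * t + 1 := Nat.le_succ _
  have hm_pos : 0 < m :=
    Nat.pos_of_dvd_of_pos hm (Nat.sub_pos_of_lt (Nat.one_lt_two_pow ht.ne'))
  have hlt {i : ℕ} (him : i ≤ m) : i * 2 ^ t < n := by
    calc i * 2 ^ t ≤ m * 2 ^ t := Nat.mul_le_mul_right _ him
      _ < (2 ^ t + 1) * m := by linarith
      _ = n := hn.symm
  refine ⟨?_, fun i hi him => ?_⟩
  · exact_mod_cast orderOf_natCast_eq_of_pow_modEq_one one_lt_two hd hpow hdt
      (by simpa using hlt hm_pos)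
  · exact ⟨ncard_cycCoset hd hpow hdt hi (hlt him), cosetLeader_eq_self hd hpow hdt hi (hlt him)⟩

theorem stmt_0 (s : ℕ) (hs : 3 ≤ s) (n : ℕ)
    (hn : n = (2 ^ (2 * s) + 1) * (2 ^ s - 1)) :
    orderOf (2 : ZMod n) = 4 * s ∧
    ∀ i : ℕ, Odd i → 1 ≤ i → i ≤ 2 ^ s - 1 →
      (cycCoset n i).ncard = 4 * s ∧ cosetLeader n i = i := by
  have hdvd : 2 ^ s - 1 ∣ 2 ^ (2 * s) - 1 := Nat.pow_sub_one_dvd_pow_sub_one 2 (dvd_mul_left s 2)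
  obtain ⟨horder, hcoset⟩ := stmt_0_general (by omega) hdvd hn
  rw [show 4 * s = 2 * (2 * s) by ring]
  exact ⟨horder, fun i hi _ him => hcoset i hi him⟩
end

section
/- Let s ≥ 2. The binary code C_{(2,n,3,1)} has length n, dimension n − 4s over GF(2), and minimum distance exactly 3. -/
open Finset

/-!
A codeword of `C_{(2,n,3,1)}` is the indicator of a set of `n`-th roots of unity summing to zero.
In characteristic two such a set cannot have one or two elements. If `2 ^ s - 1 ∣ n` with `2 ≤ s`,
the `n`-th roots of unity contain the multiplicative group of the subfield GF(2^s), hence a triple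
`1, γ, 1 + γ`, so the minimum distance is three.

The syndrome map has kernel the code and image GF(2)(β), so the code has codimension
[GF(2)(β) : GF(2)]. A proper subfield of `F` has at most `√|F|` elements, too few to contain an
element of order `n` when `|F| ≤ n ^ 2`; then GF(2)(β) is all of `F`.
-/

section RootsOfUnity

lemma three_le_card_of_sum_eq_zero_of_pow_eq_one {R : Type*} [Ring R] [Nontrivial R] [CharP R 2]
    {n : ℕ} (hn : n ≠ 0) {T : Finset R} (hT : T.Nonempty) (hpow : ∀ x ∈ T, x ^ n = 1)
    (hsum : ∑ x ∈ T, x = 0) : 3 ≤ #T := by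
  classical
  by_contra! hlt
  obtain hcard | hcard : #T = 1 ∨ #T = 2 := by have := hT.card_pos; omega
  · obtain ⟨x, rfl⟩ := card_eq_one.1 hcard
    rw [sum_singleton] at hsum
    simp [hsum, hn] at hpow
  · obtain ⟨x, y, hxy, rfl⟩ := card_eq_two.1 hcard
    rw [sum_pair hxy] at hsum
    exact hxy (CharTwo.add_eq_zero.1 hsum)

variable {R : Type*} [CommRing R] [IsDomain R]

lemma add_pow_pow_sub_one_eq_one {p s : ℕ} [Fact p.Prime] [CharP R p] {x y : R}
    (hx : x ^ (p ^ s - 1) = 1) (hy : y ^ (p ^ s - 1) = 1) (hxy : x + y ≠ 0) :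
    (x + y) ^ (p ^ s - 1) = 1 := by
  have hq : p ^ s ≠ 0 := pow_ne_zero s (Fact.out : p.Prime).ne_zero
  apply mul_right_cancel₀ hxy
  rw [pow_sub_one_mul hq, add_pow_char_pow, ← pow_sub_one_mul hq x, ← pow_sub_one_mul hq y,
    hx, hy, one_mul, one_mul, one_mul]

lemma exists_card_eq_three_and_sum_eq_zero [CharP R 2] {s : ℕ} {γ : R}
    (hγ0 : γ ≠ 0) (hγ1 : γ ≠ 1) (hγ : γ ^ (2 ^ s - 1) = 1) :
    ∃ T : Finset R, (∀ x ∈ T, x ^ (2 ^ s - 1) = 1) ∧ #T = 3 ∧ ∑ x ∈ T, x = 0 := by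
  classical
  have h_add_pow : (1 + γ) ^ (2 ^ s - 1) = 1 :=
    add_pow_pow_sub_one_eq_one (one_pow _) hγ fun h => hγ1 (CharTwo.add_eq_zero.1 h).symm
  have h_one_notMem : (1 : R) ∉ ({γ, 1 + γ} : Finset R) := by simp [hγ0, hγ1.symm]
  have h_ne : γ ≠ 1 + γ := by simp
  refine ⟨{1, γ, 1 + γ}, by simp [hγ, h_add_pow], ?_, ?_⟩
  · rw [card_insert_of_notMem h_one_notMem, card_pair h_ne]
  · rw [sum_insert h_one_notMem, sum_pair h_ne, ← add_assoc, CharTwo.add_self_eq_zero]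

open IntermediateField in
lemma span_range_pow_eq_adjoin_simple {K L : Type*} [Field K] [Field L] [Algebra K L] {n : ℕ}
    [NeZero n] {x : L} (hx : x ^ n = 1) :
    Submodule.span K (Set.range fun i : Fin n => x ^ (i : ℕ)) =
      Subalgebra.toSubmodule K⟮x⟯.toSubalgebra := by
  have hint : IsIntegral K x := IsIntegral.of_pow (NeZero.pos n) (hx ▸ isIntegral_one)
  have hpowers : (Set.range fun i : Fin n => x ^ (i : ℕ)) = Submonoid.powers x := by
    ext y
    refine ⟨by rintro ⟨i, rfl⟩; exact ⟨i, rfl⟩, ?_⟩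
    rintro ⟨j, rfl⟩
    exact ⟨⟨j % n, Nat.mod_lt j (NeZero.pos n)⟩, (pow_eq_pow_mod j hx).symm⟩
  rw [adjoin_simple_toSubalgebra_of_isAlgebraic hint.isAlgebraic, Algebra.adjoin_eq_span, hpowers,
    Submonoid.powers_eq_closure]

end RootsOfUnity

section FiniteField

lemma orderOf_lt_natCard {M : Type*} [MonoidWithZero M] [Nontrivial M] [Finite M] (x : M) :
    orderOf x < Nat.card M := by
  by_cases hx : IsUnit x
  · obtain ⟨u, rfl⟩ := hx
    classical
    have := Fintype.ofFinite M
    calc orderOf (u : M) = orderOf u := orderOf_units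
      _ ≤ Fintype.card Mˣ := orderOf_le_card_univ
      _ < Fintype.card M := card_units_lt M
      _ = Nat.card M := Fintype.card_eq_nat_card
  · rw [orderOf_eq_zero fun hfin => hx hfin.isUnit]
    exact Nat.card_pos

open IntermediateField in
lemma adjoin_simple_eq_top_of_natCard_le_orderOf_sq (K : Type*) {F : Type*} [Field K] [Field F]
    [Finite F] [Algebra K F] {x : F} (hx : Nat.card F ≤ orderOf x ^ 2) : K⟮x⟯ = ⊤ := by
  rw [← IntermediateField.finrank_eq_one_iff_eq_top]
  by_contra hne
  have hrank : 2 ≤ Module.finrank K⟮x⟯ F := by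
    have : 0 < Module.finrank K⟮x⟯ F := Module.finrank_pos
    omega
  have horder : orderOf x < Nat.card K⟮x⟯ := by
    calc orderOf x = orderOf (AdjoinSimple.gen K x) :=
          orderOf_injective (K⟮x⟯.val : K⟮x⟯ →* F) Subtype.val_injective (AdjoinSimple.gen K x)
      _ < Nat.card K⟮x⟯ := orderOf_lt_natCard _
  refine hx.not_gt ?_
  calc orderOf x ^ 2 < Nat.card K⟮x⟯ ^ 2 := by gcongr
    _ ≤ Nat.card K⟮x⟯ ^ Module.finrank K⟮x⟯ F := Nat.pow_le_pow_right Nat.card_pos hrank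
    _ = Nat.card F := (Module.natCard_eq_pow_finrank).symm

end FiniteField

section BCHCode

variable {F : Type} [Field F] [Algebra (ZMod 2) F] {n : ℕ} {β : F}

lemma mem_BCHCode_one {c : Fin n → ZMod 2} :
    c ∈ BCHCode n β {1} ↔ ∑ i, c i • β ^ (i : ℕ) = 0 := by
  change (∀ j ∈ ({1} : Finset ℕ), _) ↔ _
  simp only [mem_singleton, forall_eq, one_mul]

lemma mem_BCHCode_one_iff_sum_support {c : Fin n → ZMod 2} :
    c ∈ BCHCode n β {1} ↔ ∑ i with c i ≠ 0, β ^ (i : ℕ) = 0 := by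
  rw [mem_BCHCode_one, sum_filter]
  refine Eq.congr_left (sum_congr rfl fun i _ => ?_)
  obtain h | h : c i = 0 ∨ c i = 1 := (by decide : ∀ a : ZMod 2, a = 0 ∨ a = 1) (c i)
  all_goals simp [h]

lemma exists_mem_BCHCode_one_hammingNorm_eq_iff [NeZero n] (hβ : IsPrimitiveRoot β n) {w : ℕ} :
    (∃ c ∈ BCHCode n β {1}, hammingNorm c = w) ↔
      ∃ T : Finset F, (∀ x ∈ T, x ^ n = 1) ∧ #T = w ∧ ∑ x ∈ T, x = 0 := by
  classical
  have hinj : Function.Injective fun i : Fin n => β ^ (i : ℕ) :=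
    fun i j h => Fin.ext (hβ.pow_inj i.2 j.2 h)
  constructor
  · rintro ⟨c, hc, rfl⟩
    refine ⟨image (fun i : Fin n => β ^ (i : ℕ)) {i | c i ≠ 0}, ?_,
      card_image_of_injective _ hinj, ?_⟩
    · simp only [forall_mem_image]
      intro i _
      rw [pow_right_comm, hβ.pow_eq_one, one_pow]
    · rwa [sum_image hinj.injOn, ← mem_BCHCode_one_iff_sum_support]
  · rintro ⟨T, hT, rfl, hsum⟩
    let c : Fin n → ZMod 2 := fun i => if β ^ (i : ℕ) ∈ T then 1 else 0
    have himage : image (fun i : Fin n => β ^ (i : ℕ)) {i | c i ≠ 0} = T := by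
      ext x
      simp only [c, mem_image, mem_filter_univ, ne_eq, ite_eq_right_iff, one_ne_zero, imp_false,
        not_not]
      refine ⟨by rintro ⟨i, hi, rfl⟩; exact hi, fun hx => ?_⟩
      obtain ⟨i, hi, rfl⟩ := hβ.eq_pow_of_pow_eq_one (hT x hx)
      exact ⟨⟨i, hi⟩, hx, rfl⟩
    refine ⟨c, ?_, ?_⟩
    · rwa [← himage, sum_image hinj.injOn, ← mem_BCHCode_one_iff_sum_support] at hsum
    · rw [← himage, card_image_of_injective _ hinj, hammingNorm]

theorem minDist_BCHCode_one_eq_three [NeZero n] (hβ : IsPrimitiveRoot β n) {s : ℕ} (hs : 2 ≤ s)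
    (hsn : 2 ^ s - 1 ∣ n) : minDist (BCHCode n β {1}) = 3 := by
  have : CharP F 2 := charP_of_injective_algebraMap (algebraMap (ZMod 2) F).injective 2
  refine IsLeast.csInf_eq ⟨?_, ?_⟩
  · obtain ⟨m, hm⟩ := hsn
    have hr : 3 ≤ 2 ^ s - 1 := Nat.sub_le_sub_right (Nat.pow_le_pow_right two_pos hs) 1
    have hγ : IsPrimitiveRoot (β ^ m) (2 ^ s - 1) :=
      hβ.pow (NeZero.pos n) (hm.trans (mul_comm _ _))
    obtain ⟨T, hT, hcard, hsum⟩ := exists_card_eq_three_and_sum_eq_zero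
      (hγ.ne_zero (by omega)) (hγ.ne_one (by omega)) hγ.pow_eq_one
    obtain ⟨c, hc, hnorm⟩ := (exists_mem_BCHCode_one_hammingNorm_eq_iff hβ).2
      ⟨T, fun x hx => by rw [hm, pow_mul, hT x hx, one_pow], hcard, hsum⟩
    exact ⟨c, hc, hammingNorm_ne_zero_iff.1 (by omega), hnorm⟩
  · rintro _ ⟨c, hc, hc0, rfl⟩
    obtain ⟨T, hT, hcard, hsum⟩ := (exists_mem_BCHCode_one_hammingNorm_eq_iff hβ).1 ⟨c, hc, rfl⟩
    rw [← hcard]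
    refine three_le_card_of_sum_eq_zero_of_pow_eq_one (NeZero.ne n) (card_pos.1 ?_) hT hsum
    rwa [hcard, hammingNorm_pos_iff]

lemma BCHCode_one_eq_ker_linearCombination :
    BCHCode n β {1} =
      LinearMap.ker (Fintype.linearCombination (ZMod 2) fun i : Fin n => β ^ (i : ℕ)) := by
  ext c
  rw [mem_BCHCode_one, LinearMap.mem_ker, Fintype.linearCombination_apply]

open IntermediateField in
theorem finrank_BCHCode_one_add_finrank_adjoin [NeZero n] (hβ : β ^ n = 1) :
    Module.finrank (ZMod 2) (BCHCode n β {1}) + Module.finrank (ZMod 2) (ZMod 2)⟮β⟯ = n := by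
  have hrank := LinearMap.finrank_range_add_finrank_ker
    (Fintype.linearCombination (ZMod 2) fun i : Fin n => β ^ (i : ℕ))
  rw [Fintype.range_linearCombination, span_range_pow_eq_adjoin_simple hβ,
    ← BCHCode_one_eq_ker_linearCombination, Module.finrank_fin_fun] at hrank
  rw [add_comm]
  exact hrank

end BCHCode

theorem stmt_1_general {F : Type} [Field F] [Finite F] [Algebra (ZMod 2) F] {s n : ℕ} {β : F}
    (hs : 2 ≤ s) (hsn : 2 ^ s - 1 ∣ n) (hn : Nat.card F ≤ n ^ 2) (hβ : IsPrimitiveRoot β n) :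
    Module.finrank (ZMod 2) (BCHCode n β {1}) = n - Module.finrank (ZMod 2) F ∧
    minDist (BCHCode n β {1}) = 3 := by
  have : NeZero n := ⟨by rintro rfl; exact Nat.card_pos.not_ge hn⟩
  refine ⟨?_, minDist_BCHCode_one_eq_three hβ hs hsn⟩
  have hdim := finrank_BCHCode_one_add_finrank_adjoin hβ.pow_eq_one
  rw [adjoin_simple_eq_top_of_natCard_le_orderOf_sq (ZMod 2) (hβ.eq_orderOf ▸ hn),
    IntermediateField.finrank_top'] at hdim
  exact Nat.eq_sub_of_add_eq hdim

lemma isPrimitiveRoot_pow_two_pow_add_one {M : Type*} [CommMonoid M] {s : ℕ} (hs : s ≠ 0) {α : M}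
    (hα : orderOf α = 2 ^ (4 * s) - 1) :
    IsPrimitiveRoot (α ^ (2 ^ s + 1)) ((2 ^ (2 * s) + 1) * (2 ^ s - 1)) := by
  have hfactor : 2 ^ (4 * s) - 1 = (2 ^ s + 1) * ((2 ^ (2 * s) + 1) * (2 ^ s - 1)) := by
    obtain ⟨r, hr⟩ := Nat.exists_eq_add_one.2 (Nat.two_pow_pos s)
    rw [mul_comm 4, mul_comm 2, pow_mul, pow_mul, hr, Nat.add_sub_cancel]
    exact Nat.sub_eq_of_eq_add (by ring)
  have hpos : 0 < orderOf α := hα ▸ Nat.sub_pos_of_lt (Nat.one_lt_two_pow (by omega))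
  exact (IsPrimitiveRoot.orderOf α).pow hpos (hα.trans hfactor)

lemma two_pow_four_mul_le_sq {s : ℕ} (hs : s ≠ 0) :
    2 ^ (4 * s) ≤ ((2 ^ (2 * s) + 1) * (2 ^ s - 1)) ^ 2 := by
  have hr : 0 < 2 ^ s - 1 := Nat.sub_pos_of_lt (Nat.one_lt_two_pow hs)
  calc 2 ^ (4 * s) = (2 ^ (2 * s)) ^ 2 := by rw [← pow_mul]; ring_nf
    _ ≤ ((2 ^ (2 * s) + 1) * (2 ^ s - 1)) ^ 2 :=
      Nat.pow_le_pow_left ((Nat.le_succ _).trans (Nat.le_mul_of_pos_right _ hr)) 2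

theorem stmt_1 (s : ℕ) (hs : 2 ≤ s) (n : ℕ) (hn : n = (2 ^ (2 * s) + 1) * (2 ^ s - 1))
    (α : GaloisField 2 (4 * s)) (hα : orderOf α = 2 ^ (4 * s) - 1)
    (β : GaloisField 2 (4 * s)) (hβ : β = α ^ (2 ^ s + 1)) :
    Module.finrank (ZMod 2) (BCHCode n β {1}) = n - 4 * s ∧
    minDist (BCHCode n β {1}) = 3 := by
  subst hn hβ
  simpa only [GaloisField.finrank 2 (show 4 * s ≠ 0 by omega)] using
    stmt_1_general hs (dvd_mul_left _ _)
      ((GaloisField.card 2 (4 * s) (by omega)).trans_le (two_pow_four_mul_le_sq (by omega)))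
      (isPrimitiveRoot_pow_two_pow_add_one (by omega) hα)
end

section
/- Let s ≥ 2. The dual code C_{(2,n,3,1)}^⊥ has dimension 4s and minimum distance 2^{3s−1} − 2^{2s−1}; moreover it contains exactly 2^{4s} − 1 − n codewords of Hamming weight 2^{3s−1} − 2^{2s−1}, exactly n codewords of Hamming weight 2^{3s−1}, the zero codeword, and no codewords of any other weight. -/
open Finset

/-!
Put `q = 2 ^ s`, `F = GF(q ^ 4)` and `d = q + 1`, so that `n * d = #F - 1`. By Delsarte's theorem
the dual code consists of the words `i ↦ Tr (a * β ^ i)` with `a ∈ F`. Since `x ↦ x ^ d` maps the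
nonzero elements `d`-to-one onto the powers of `β`, the weight of such a word is determined by the
Weil sum `S(a) = ∑ x, (-1) ^ Tr (a * x ^ (q + 1))`, whose argument is a quadratic form in `x`.
If `a` is neither zero nor a power of `β`, this form has a nondegenerate polarization, so
`S(a) ^ 2 = #F`; the sign follows from `S(a) ≡ 1` modulo `q + 1`. On the powers of `β` the sum is
constant, and its value there is forced by `∑ a, S(a) = #F`.
-/

section SignSums

/-- The sign `(-1) ^ z` of a bit `z`, as an additive character with integer values. -/
def bitSign : AddChar (ZMod 2) ℤ := AddChar.zmodChar 2 (ζ := -1) (by norm_num)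

lemma bitSign_eq_one_sub (z : ZMod 2) : bitSign z = 1 - 2 * if z ≠ 0 then 1 else 0 := by
  revert z; decide

lemma bitSign_mul_self (z : ZMod 2) : bitSign z * bitSign z = 1 := by
  revert z; decide

lemma sum_bitSign {ι : Type*} [Fintype ι] (c : ι → ZMod 2) :
    ∑ i, bitSign (c i) = Fintype.card ι - 2 * (hammingNorm c : ℤ) := by
  simp only [bitSign_eq_one_sub, sum_sub_distrib, ← mul_sum, sum_boole, hammingNorm,
    sum_const, card_univ, nsmul_one]

variable {V : Type*} [AddCommGroup V] [Module (ZMod 2) V] [Fintype V]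

open Classical in
lemma sum_bitSign_dual (ℓ : Module.Dual (ZMod 2) V) :
    ∑ x, bitSign (ℓ x) = if ℓ = 0 then (Fintype.card V : ℤ) else 0 := by
  have trivial_iff : bitSign.compAddMonoidHom ℓ.toAddMonoidHom = 0 ↔ ℓ = 0 := by
    have eq_zero_of_bitSign : ∀ z, bitSign z = 1 ↔ z = 0 := by decide
    simp [AddChar.eq_zero_iff, LinearMap.ext_iff, eq_zero_of_bitSign]
  simpa [trivial_iff] using AddChar.sum_eq_ite (bitSign.compAddMonoidHom ℓ.toAddMonoidHom)

-- Substituting `x + y` for `x` in the double sum turns the sum over `y` into a character sum,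
-- which vanishes unless `x` lies in the radical of the polar form.
theorem sq_sum_bitSign_quadraticForm (Q : QuadraticForm (ZMod 2) V)
    (hQ : Q.polarBilin.SeparatingLeft) : (∑ x, bitSign (Q x)) ^ 2 = Fintype.card V := by
  classical
  have shift (x y : V) : bitSign (Q (x + y)) * bitSign (Q y) =
      bitSign (Q x) * bitSign (Q.polarBilin x y) := by
    rw [QuadraticMap.map_add Q x y, AddChar.map_add_eq_mul, AddChar.map_add_eq_mul,
      mul_right_comm, mul_assoc (bitSign (Q x)), bitSign_mul_self, mul_one]
    rfl
  calc (∑ x, bitSign (Q x)) ^ 2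
      = ∑ y, ∑ x, bitSign (Q x) * bitSign (Q y) := by rw [sq, sum_mul_sum, sum_comm]
    _ = ∑ y, ∑ x, bitSign (Q (x + y)) * bitSign (Q y) :=
        sum_congr rfl fun y _ ↦
          (Equiv.sum_comp (Equiv.addRight y) fun x ↦ bitSign (Q x) * bitSign (Q y)).symm
    _ = ∑ x, bitSign (Q x) * ∑ y, bitSign (Q.polarBilin x y) := by
        rw [sum_comm]
        simp only [shift, mul_sum]
    _ = Fintype.card V := by
        have polarBilin_eq_zero (x : V) : Q.polarBilin x = 0 ↔ x = 0 :=
          ⟨LinearMap.separatingLeft_iff_linear_nontrivial.1 hQ x, by rintro rfl; exact map_zero _⟩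
        simp only [sum_bitSign_dual, polarBilin_eq_zero]
        simp

end SignSums

section PowerMap

open Polynomial

variable {F : Type*} [Field F] [Fintype F] {n d : ℕ}

lemma exponent_ne_zero_of_card_eq {m s : ℕ} (hF : Fintype.card F = 2 ^ (m * s)) : s ≠ 0 := by
  rintro rfl
  simpa [hF] using Fintype.one_lt_card (α := F)

lemma exists_isPrimitiveRoot_mul (h : n * d + 1 = Fintype.card F) :
    ∃ γ : F, IsPrimitiveRoot γ (n * d) := by
  classical
  obtain ⟨g, hg⟩ := IsCyclic.exists_ofOrder_eq_natCard (α := Fˣ)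
  rw [Nat.card_eq_fintype_card, Fintype.card_units, ← h, Nat.add_sub_cancel] at hg
  have hcoe : Function.Injective (Units.coeHom F) := Units.val_injective
  exact ⟨g, hg ▸ (IsPrimitiveRoot.orderOf g).map_of_injective hcoe⟩

lemma pos_of_mul_add_one_eq_card (h : n * d + 1 = Fintype.card F) : 0 < n ∧ 0 < d := by
  have hcard := Fintype.one_lt_card (α := F)
  have hnd : 0 < n * d := by omega
  exact ⟨pos_of_mul_pos_left hnd d.zero_le, pos_of_mul_pos_right hnd n.zero_le⟩

lemma pow_pow_eq_one_of_mul_add_one_eq_card (h : n * d + 1 = Fintype.card F) {x : F} (hx : x ≠ 0) :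
    (x ^ d) ^ n = 1 := by
  rw [← pow_mul, mul_comm, ← FiniteField.pow_card_sub_one_eq_one x hx, ← h, Nat.add_sub_cancel]

lemma exists_pow_eq_of_pow_eq_one (h : n * d + 1 = Fintype.card F) {a : F} (ha : a ^ n = 1) :
    ∃ b, b ^ d = a := by
  obtain ⟨γ, hγ⟩ := exists_isPrimitiveRoot_mul h
  obtain ⟨hn, hd⟩ := pos_of_mul_add_one_eq_card h
  have : NeZero n := ⟨hn.ne'⟩
  obtain ⟨i, -, rfl⟩ := (hγ.pow (Nat.mul_pos hn hd) (mul_comm n d)).eq_pow_of_pow_eq_one ha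
  exact ⟨γ ^ i, pow_right_comm γ i d⟩

lemma card_nthRootsFinset_one (h : n * d + 1 = Fintype.card F) :
    #(nthRootsFinset n (1 : F)) = n := by
  obtain ⟨γ, hγ⟩ := exists_isPrimitiveRoot_mul h
  obtain ⟨hn, hd⟩ := pos_of_mul_add_one_eq_card h
  exact (hγ.pow (Nat.mul_pos hn hd) (mul_comm n d)).card_nthRootsFinset

open Classical in
lemma card_filter_pow_eq (h : n * d + 1 = Fintype.card F) {a : F} (ha : a ^ n = 1) :
    #{x : F | x ^ d = a} = d := by
  obtain ⟨γ, hγ⟩ := exists_isPrimitiveRoot_mul h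
  obtain ⟨hn, hd⟩ := pos_of_mul_add_one_eq_card h
  have hζ : IsPrimitiveRoot (γ ^ n) d := hγ.pow (Nat.mul_pos hn hd) rfl
  have ha0 : a ≠ 0 := by rintro rfl; simp [hn.ne'] at ha
  calc #{x : F | x ^ d = a} = #(nthRootsFinset d a) := by
        congr 1; ext x; simp [mem_nthRootsFinset hd]
    _ = d := by
        rw [nthRootsFinset_def, Multiset.toFinset_card_of_nodup (hζ.nthRoots_nodup ha0),
          hζ.card_nthRoots, if_pos (exists_pow_eq_of_pow_eq_one h ha)]

lemma sum_nthRootsFinset_one {R M : Type*} [CommRing R] [IsDomain R] [AddCommMonoid M] {n : ℕ}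
    [NeZero n] {β : R} (hβ : IsPrimitiveRoot β n) (f : R → M) :
    ∑ b ∈ nthRootsFinset n (1 : R), f b = ∑ i : Fin n, f (β ^ (i : ℕ)) := by
  refine (sum_nbij (fun i : Fin n ↦ β ^ (i : ℕ)) (fun i _ ↦ ?_) (fun i _ j _ hij ↦ ?_)
    (fun b hb ↦ ?_) fun _ _ ↦ rfl).symm
  · rw [mem_nthRootsFinset (NeZero.pos n), pow_right_comm, hβ.pow_eq_one, one_pow]
  · exact Fin.ext (hβ.pow_inj i.isLt j.isLt hij)
  · obtain ⟨i, hi, rfl⟩ := hβ.eq_pow_of_pow_eq_one ((mem_nthRootsFinset (NeZero.pos n) 1).1 hb)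
    exact ⟨⟨i, hi⟩, mem_coe.2 (mem_univ _), rfl⟩

lemma sum_comp_pow {M : Type*} [AddCommMonoid M] (h : n * d + 1 = Fintype.card F) (f : F → M) :
    ∑ x : F, f (x ^ d) = f 0 + d • ∑ b ∈ nthRootsFinset n (1 : F), f b := by
  classical
  obtain ⟨hn, hd⟩ := pos_of_mul_add_one_eq_card h
  rw [← add_sum_erase univ _ (mem_univ 0), zero_pow hd.ne', smul_sum]
  congr 1
  rw [← sum_fiberwise_of_maps_to (t := nthRootsFinset n (1 : F)) (g := (· ^ d))
    fun x hx ↦ (mem_nthRootsFinset hn 1).2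
      (pow_pow_eq_one_of_mul_add_one_eq_card h (ne_of_mem_erase hx))]
  refine sum_congr rfl fun b hb ↦ ?_
  have hb1 : b ^ n = 1 := (mem_nthRootsFinset hn 1).1 hb
  have fiber : ({x ∈ univ.erase 0 | x ^ d = b} : Finset F) = ({x | x ^ d = b} : Finset F) := by
    ext x
    have : x ^ d = b → x ≠ 0 := by
      rintro rfl rfl
      simp [hn.ne', hd.ne'] at hb1
    simpa using this
  rw [fiber, sum_congr rfl fun x hx ↦ congrArg f (mem_filter.1 hx).2, sum_const,
    card_filter_pow_eq h hb1]

end PowerMap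

section GoldForm

variable {F : Type*} [Field F] [Algebra (ZMod 2) F]

lemma trace_pow_two_pow [Finite F] (x : F) (s : ℕ) :
    Algebra.trace (ZMod 2) F (x ^ 2 ^ s) = Algebra.trace (ZMod 2) F x := by
  simpa [FiniteField.coe_frobeniusAlgEquivOfAlgebraic_iterate, ZMod.card] using
    Algebra.trace_eq_of_algEquiv (FiniteField.frobeniusAlgEquivOfAlgebraic (ZMod 2) F ^ s) x

/-- The quadratic form `x ↦ Tr (a * x ^ (2 ^ s + 1))` on a finite field of characteristic two,
a scaled Gold function; it comes from the bilinear form `(x, y) ↦ Tr (a * x ^ 2 ^ s * y)`. -/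
noncomputable def goldForm (s : ℕ) (a : F) : QuadraticForm (ZMod 2) F :=
  LinearMap.BilinMap.toQuadraticMap <| (Algebra.traceForm (ZMod 2) F).compl₁₂
    (LinearMap.mulLeft (ZMod 2) a ∘ₗ (FiniteField.frobeniusAlgHom (ZMod 2) F ^ s).toLinearMap)
    LinearMap.id

lemma goldForm_apply (s : ℕ) (a x : F) :
    goldForm s a x = Algebra.trace (ZMod 2) F (a * x ^ (2 ^ s + 1)) := by
  simp [goldForm, FiniteField.coe_frobeniusAlgHom, pow_iterate, ZMod.card, pow_succ x (2 ^ s),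
    mul_assoc]

lemma goldForm_polarBilin_apply (s : ℕ) (a x y : F) :
    (goldForm s a).polarBilin x y = Algebra.trace (ZMod 2) F (a * x ^ 2 ^ s * y) +
      Algebra.trace (ZMod 2) F (a * y ^ 2 ^ s * x) := by
  simp [goldForm, LinearMap.BilinMap.polar_toQuadraticMap, FiniteField.coe_frobeniusAlgHom,
    pow_iterate, ZMod.card]

-- Applying Frobenius to the first trace puts both in the form `Tr (c * y ^ 2 ^ s)`.
lemma pow_eq_mul_of_goldForm_polarBilin_eq_zero [Finite F] {s : ℕ} {a x : F}
    (hx : ∀ y, (goldForm s a).polarBilin x y = 0) : (a * x ^ 2 ^ s) ^ 2 ^ s = a * x := by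
  have := charP_of_injective_algebraMap (algebraMap (ZMod 2) F).injective 2
  refine CharTwo.add_eq_zero.1 ((traceForm_nondegenerate (ZMod 2) F).1 _ fun z ↦ ?_)
  obtain ⟨y, rfl⟩ : ∃ y, y ^ 2 ^ s = z := (bijective_iterateFrobenius F 2 s).surjective z
  rw [← hx y, goldForm_polarBilin_apply, Algebra.traceForm_apply, add_mul, map_add, ← mul_pow,
    trace_pow_two_pow, mul_right_comm a x]

end GoldForm

section WeilSums

open Polynomial

variable {F : Type*} [Field F] [Fintype F] [Algebra (ZMod 2) F] {n d s k : ℕ} {a : F}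

/-- The binomial Weil sum `∑ x, (-1) ^ Tr (a * x ^ d)` over a finite field of characteristic
two. -/
noncomputable def weilSum (d : ℕ) (a : F) : ℤ :=
  ∑ x : F, bitSign (Algebra.trace (ZMod 2) F (a * x ^ d))

lemma weilSum_zero (d : ℕ) : weilSum d (0 : F) = Fintype.card F := by
  simp [weilSum]

lemma weilSum_mul_pow (d : ℕ) (a : F) {b : F} (hb : b ≠ 0) :
    weilSum d (a * b ^ d) = weilSum d a := by
  simp only [weilSum, mul_assoc, ← mul_pow]
  exact Equiv.sum_comp (Equiv.mulLeft₀ b hb) fun x ↦ bitSign (Algebra.trace (ZMod 2) F (a * x ^ d))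

lemma weilSum_eq_of_pow_eq_one (h : n * d + 1 = Fintype.card F) {a b : F} (ha : a ^ n = 1)
    (hb : b ^ n = 1) : weilSum d a = weilSum d b := by
  obtain ⟨hn, hd⟩ := pos_of_mul_add_one_eq_card h
  have hb0 : b ≠ 0 := by rintro rfl; simp [hn.ne'] at hb
  have hab : (a / b) ^ n = 1 := by rw [div_pow, ha, hb, div_one]
  obtain ⟨c, hc⟩ := exists_pow_eq_of_pow_eq_one h hab
  have hc0 : c ≠ 0 := by rintro rfl; simp [← hc, hn.ne', hd.ne'] at hab
  rw [← weilSum_mul_pow d b hc0, hc, mul_div_cancel₀ a hb0]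

lemma sum_weilSum (hd : d ≠ 0) : ∑ a : F, weilSum d a = Fintype.card F := by
  classical
  have traceForm_eq_zero (x : F) : Algebra.traceForm (ZMod 2) F x = 0 ↔ x = 0 :=
    ⟨LinearMap.separatingLeft_iff_linear_nontrivial.1 (traceForm_nondegenerate (ZMod 2) F).1 x,
      by rintro rfl; exact map_zero _⟩
  calc ∑ a : F, weilSum d a
      = ∑ x : F, ∑ a : F, bitSign (Algebra.traceForm (ZMod 2) F (x ^ d) a) := by
        simp only [weilSum, Algebra.traceForm_apply, mul_comm (_ ^ d)]
        exact sum_comm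
    _ = Fintype.card F := by
        simp only [sum_bitSign_dual, traceForm_eq_zero, pow_eq_zero_iff hd]
        simp

lemma weilSum_eq_add_sum_nthRootsFinset (h : n * d + 1 = Fintype.card F) (a : F) :
    weilSum d a =
      1 + d * ∑ b ∈ nthRootsFinset n (1 : F), bitSign (Algebra.trace (ZMod 2) F (a * b)) := by
  simpa [weilSum] using sum_comp_pow h fun b ↦ bitSign (Algebra.trace (ZMod 2) F (a * b))

lemma weilSum_modEq_one (h : n * d + 1 = Fintype.card F) (a : F) : weilSum d a ≡ 1 [ZMOD d] := by
  rw [weilSum_eq_add_sum_nthRootsFinset h]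
  exact Int.modEq_iff_dvd.2 (by simp)

lemma int_eq_of_sq_eq_sq_of_modEq_one {m x y : ℤ} (hm : 2 < m) (h : x ^ 2 = y ^ 2)
    (hx : x ≡ 1 [ZMOD m]) (hy : y ≡ 1 [ZMOD m]) : x = y := by
  refine (sq_eq_sq_iff_eq_or_eq_neg.1 h).resolve_right ?_
  rintro rfl
  have : m ∣ 2 := by simpa using (hx.add hy).dvd
  exact hm.not_ge (Int.le_of_dvd two_pos this)

lemma goldForm_polarBilin_separatingLeft (h : n * (2 ^ s + 1) + 1 = Fintype.card F)
    (hn : 2 ^ s - 1 ∣ n) (ha : a ≠ 0) (han : a ^ n ≠ 1) :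
    (goldForm s a).polarBilin.SeparatingLeft := by
  intro x hx
  by_contra hx0
  set z := a * x ^ (2 ^ s + 1)
  have z_ne_zero : z ≠ 0 := mul_ne_zero ha (pow_ne_zero _ hx0)
  have z_pow : z ^ 2 ^ s = z := by
    rw [show z = a * x ^ 2 ^ s * x by ring, mul_pow _ x,
      pow_eq_mul_of_goldForm_polarBilin_eq_zero hx]
    ring
  have z_pow_sub_one : z ^ (2 ^ s - 1) = 1 := by
    rw [pow_sub₀ z z_ne_zero Nat.one_le_two_pow, z_pow, pow_one, mul_inv_cancel₀ z_ne_zero]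
  obtain ⟨m, rfl⟩ := hn
  refine han ?_
  calc a ^ ((2 ^ s - 1) * m) = z ^ ((2 ^ s - 1) * m) := by
        rw [mul_pow, pow_pow_eq_one_of_mul_add_one_eq_card h hx0, mul_one]
    _ = 1 := by rw [pow_mul, z_pow_sub_one, one_pow]

lemma weilSum_sq_of_pow_ne_one (h : n * (2 ^ s + 1) + 1 = Fintype.card F)
    (hn : 2 ^ s - 1 ∣ n) (ha : a ≠ 0) (han : a ^ n ≠ 1) :
    weilSum (2 ^ s + 1) a ^ 2 = Fintype.card F := by
  simpa only [weilSum, goldForm_apply] using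
    sq_sum_bitSign_quadraticForm _ (goldForm_polarBilin_separatingLeft h hn ha han)

lemma sub_one_dvd_of_mul_add_one_eq_pow {q : ℕ}
    (h : n * (q + 1) + 1 = q ^ (2 * k)) : q - 1 ∣ n := by
  refine Nat.dvd_of_mul_dvd_mul_right q.succ_pos ?_
  have := Nat.sub_dvd_pow_sub_pow (q ^ 2) 1 k
  rwa [one_pow, ← pow_mul, ← h, Nat.add_sub_cancel, ← one_pow 2, Nat.sq_sub_sq, mul_comm] at this

theorem weilSum_of_pow_ne_one (hF : Fintype.card F = (2 ^ s) ^ (2 * k))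
    (h : n * (2 ^ s + 1) + 1 = Fintype.card F) (ha : a ≠ 0) (han : a ^ n ≠ 1) :
    weilSum (2 ^ s + 1) a = (-2 ^ s) ^ k := by
  have hs := exponent_ne_zero_of_card_eq (hF.trans (pow_mul' 2 (2 * k) s).symm)
  have hn := sub_one_dvd_of_mul_add_one_eq_pow (h.trans hF)
  have neg_modEq : (-2 ^ s : ℤ) ≡ 1 [ZMOD 2 ^ s + 1] :=
    Int.modEq_iff_dvd.2 (by simp [add_comm])
  refine int_eq_of_sq_eq_sq_of_modEq_one (m := 2 ^ s + 1) ?_ ?_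
    (mod_cast weilSum_modEq_one h a) (by simpa using neg_modEq.pow k)
  · exact_mod_cast Nat.succ_lt_succ (Nat.one_lt_two_pow hs)
  · rw [weilSum_sq_of_pow_ne_one h hn ha han, hF]
    push_cast
    rw [← pow_mul' (-2 ^ s : ℤ), (even_two_mul k).neg_pow]

theorem weilSum_of_pow_eq_one (hF : Fintype.card F = (2 ^ s) ^ (2 * k))
    (h : n * (2 ^ s + 1) + 1 = Fintype.card F) (ha : a ^ n = 1) :
    weilSum (2 ^ s + 1) a = (-2 ^ s) ^ (k + 1) := by
  classical
  obtain ⟨hn, -⟩ := pos_of_mul_add_one_eq_card h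
  have zero_notMem : (0 : F) ∉ nthRootsFinset n 1 := by simp [mem_nthRootsFinset hn, hn.ne']
  have total : ∑ b : F, (weilSum (2 ^ s + 1) b - (-2 ^ s) ^ k) =
      (Fintype.card F - (-2 ^ s) ^ k) + n * (weilSum (2 ^ s + 1) a - (-2 ^ s) ^ k) := by
    rw [← sum_subset (subset_univ (insert 0 (nthRootsFinset n 1))), sum_insert zero_notMem,
      weilSum_zero, sum_congr rfl fun b hb ↦ by
        rw [weilSum_eq_of_pow_eq_one h ((mem_nthRootsFinset hn 1).1 hb) ha], sum_const,
      card_nthRootsFinset_one h, nsmul_eq_mul]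
    intro b _ hb
    rw [mem_insert, mem_nthRootsFinset hn, not_or] at hb
    rw [weilSum_of_pow_ne_one hF h hb.1 hb.2, sub_self]
  rw [sum_sub_distrib, sum_weilSum (Nat.succ_ne_zero _), sum_const, card_univ, nsmul_eq_mul, ← h]
    at total
  refine mul_left_cancel₀ (Nat.cast_ne_zero.2 hn.ne' : (n : ℤ) ≠ 0) ?_
  push_cast at total
  linear_combination -total

end WeilSums

section Codes

variable {N w : ℕ} {C : Submodule (ZMod 2) (Fin N → ZMod 2)}

lemma weightCount_zero (C : Submodule (ZMod 2) (Fin N → ZMod 2)) : weightCount C 0 = 1 := by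
  rw [weightCount, Set.ncard_eq_one]
  refine ⟨0, Set.ext fun c ↦ ?_⟩
  simp only [hammingNorm_eq_zero]
  exact ⟨And.right, fun hc ↦ ⟨hc ▸ C.zero_mem, hc⟩⟩

lemma weightCount_eq_zero_iff : weightCount C w = 0 ↔ ∀ c ∈ C, hammingNorm c ≠ w := by
  rw [weightCount, Set.ncard_eq_zero, Set.eq_empty_iff_forall_notMem]
  exact forall_congr' fun c ↦ not_and

lemma minDist_eq_of_weightCount {m : ℕ} (hm : m ≠ 0) (hCm : weightCount C m ≠ 0)
    (hlt : ∀ w, w ≠ 0 → w < m → weightCount C w = 0) : minDist C = m := by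
  obtain ⟨c, hcC, hcm⟩ : ∃ c ∈ C, hammingNorm c = m := by
    simpa [weightCount_eq_zero_iff] using hCm
  refine IsLeast.csInf_eq ⟨⟨c, hcC, hammingNorm_ne_zero_iff.1 (hcm ▸ hm), hcm⟩, ?_⟩
  rintro _ ⟨b, hbC, hb, rfl⟩
  by_contra! hbm
  exact weightCount_eq_zero_iff.1 (hlt _ (hammingNorm_ne_zero_iff.2 hb) hbm) b hbC rfl

lemma weightCount_range {V : Type*} [AddCommGroup V] [Module (ZMod 2) V] [Fintype V]
    {f : V →ₗ[ZMod 2] Fin N → ZMod 2} (hf : Function.Injective f) (w : ℕ) :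
    weightCount (LinearMap.range f) w = #{a | hammingNorm (f a) = w} := by
  rw [weightCount, ← Set.ncard_coe_finset, ← Set.ncard_image_of_injective _ hf]
  congr 1
  ext c
  constructor
  · rintro ⟨⟨a, rfl⟩, ha⟩
    exact ⟨a, by simpa using ha, rfl⟩
  · rintro ⟨a, ha, rfl⟩
    exact ⟨⟨a, rfl⟩, by simpa using ha⟩

end Codes

section TraceWords

variable {ι F : Type*} [Field F] [Algebra (ZMod 2) F]

/-- The word `i ↦ Tr (a * v i)`, as a linear function of `a`; Delsarte's theorem
(`dualCode_ker_linearCombination`) says that these words form the dual of the code of linear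
relations between the `v i`. -/
noncomputable def traceWord (v : ι → F) : F →ₗ[ZMod 2] ι → ZMod 2 :=
  LinearMap.pi fun i ↦ (Algebra.traceForm (ZMod 2) F).flip (v i)

lemma traceWord_apply (v : ι → F) (a : F) (i : ι) :
    traceWord v a i = Algebra.trace (ZMod 2) F (a * v i) := rfl

theorem dualCode_ker_linearCombination [Finite F] {N : ℕ} (v : Fin N → F) :
    dualCode (LinearMap.ker (Fintype.linearCombination (ZMod 2) v)) =
      LinearMap.range (traceWord v) := by
  ext b
  calc b ∈ dualCode (LinearMap.ker (Fintype.linearCombination (ZMod 2) v))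
      ↔ Fintype.linearCombination (ZMod 2) b ∈
          (LinearMap.ker (Fintype.linearCombination (ZMod 2) v)).dualAnnihilator := by
        simp only [Submodule.mem_dualAnnihilator, Fintype.linearCombination_apply, smul_eq_mul,
          mul_comm (_ : ZMod 2) (b _)]
        rfl
    _ ↔ ∃ g : Module.Dual (ZMod 2) F, ∀ i, g (v i) = b i := by
        rw [← LinearMap.range_dualMap_eq_dualAnnihilator_ker, LinearMap.mem_range]
        refine exists_congr fun g ↦ ⟨fun hg i ↦ ?_, fun hg ↦ LinearMap.ext fun c ↦ ?_⟩
        · simpa using LinearMap.congr_fun hg (Pi.single i 1)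
        · simp [Fintype.linearCombination_apply, hg]
    _ ↔ b ∈ LinearMap.range (traceWord v) := by
        let e := (Algebra.traceForm (ZMod 2) F).toDual (traceForm_nondegenerate (ZMod 2) F)
        rw [e.surjective.exists, LinearMap.mem_range]
        exact exists_congr fun a ↦ funext_iff.symm

lemma BCHCode_singleton_one {F : Type} [Field F] [Algebra (ZMod 2) F] (n : ℕ) (β : F) :
    BCHCode n β {1} =
      LinearMap.ker (Fintype.linearCombination (ZMod 2) fun i : Fin n ↦ β ^ (i : ℕ)) := by
  ext c
  simp [BCHCode, Fintype.linearCombination_apply]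

variable [Fintype F] {n d : ℕ} {β : F}

lemma weilSum_eq_card_sub_hammingNorm (h : n * d + 1 = Fintype.card F) (hβ : IsPrimitiveRoot β n)
    (a : F) : weilSum d a = Fintype.card F -
      2 * d * (hammingNorm (traceWord (fun i : Fin n ↦ β ^ (i : ℕ)) a) : ℤ) := by
  have : NeZero n := ⟨(pos_of_mul_add_one_eq_card h).1.ne'⟩
  rw [weilSum_eq_add_sum_nthRootsFinset h, sum_nthRootsFinset_one hβ, ← h]
  simp only [← traceWord_apply (fun i : Fin n ↦ β ^ (i : ℕ))]
  rw [sum_bitSign, Fintype.card_fin]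
  push_cast
  ring

end TraceWords

section TwoWeights

open Polynomial

variable {F : Type*} [Field F] [Fintype F] [Algebra (ZMod 2) F] {s n : ℕ} {β : F}

lemma two_mul_hammingNorm_traceWord (hF : Fintype.card F = 2 ^ (4 * s))
    (h : n * (2 ^ s + 1) + 1 = Fintype.card F) (hβ : IsPrimitiveRoot β n) {a : F}
    (ha : a ^ n = 1) :
    2 * hammingNorm (traceWord (fun i : Fin n ↦ β ^ (i : ℕ)) a) = 2 ^ (3 * s) := by
  have hW := weilSum_of_pow_eq_one (k := 2) (by rw [hF, ← pow_mul, mul_comm s]) h ha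
  rw [weilSum_eq_card_sub_hammingNorm h hβ, hF] at hW
  push_cast at hW
  zify
  rw [pow_mul'] at hW ⊢
  refine mul_left_cancel₀ (by positivity : (2 ^ s + 1 : ℤ) ≠ 0) ?_
  linear_combination -hW

lemma two_mul_hammingNorm_traceWord_add (hF : Fintype.card F = 2 ^ (4 * s))
    (h : n * (2 ^ s + 1) + 1 = Fintype.card F) (hβ : IsPrimitiveRoot β n) {a : F} (ha : a ≠ 0)
    (han : a ^ n ≠ 1) :
    2 * hammingNorm (traceWord (fun i : Fin n ↦ β ^ (i : ℕ)) a) + 2 ^ (2 * s) = 2 ^ (3 * s) := by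
  have hW := weilSum_of_pow_ne_one (k := 2) (by rw [hF, ← pow_mul, mul_comm s]) h ha han
  rw [weilSum_eq_card_sub_hammingNorm h hβ, hF] at hW
  push_cast at hW
  zify
  rw [pow_mul'] at hW
  rw [pow_mul', pow_mul']
  refine mul_left_cancel₀ (by positivity : (2 ^ s + 1 : ℤ) ≠ 0) ?_
  linear_combination -hW

open Classical in
theorem hammingNorm_traceWord (hF : Fintype.card F = 2 ^ (4 * s))
    (h : n * (2 ^ s + 1) + 1 = Fintype.card F) (hβ : IsPrimitiveRoot β n) (a : F) :
    hammingNorm (traceWord (fun i : Fin n ↦ β ^ (i : ℕ)) a) =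
      if a = 0 then 0 else if a ^ n = 1 then 2 ^ (3 * s - 1)
        else 2 ^ (3 * s - 1) - 2 ^ (2 * s - 1) := by
  have hs := exponent_ne_zero_of_card_eq hF
  have two_mul_pow_three : 2 * 2 ^ (3 * s - 1) = 2 ^ (3 * s) := mul_pow_sub_one (by omega) 2
  have two_mul_pow_two : 2 * 2 ^ (2 * s - 1) = 2 ^ (2 * s) := mul_pow_sub_one (by omega) 2
  split_ifs with ha han
  · rw [ha, map_zero, hammingNorm_zero]
  · have := two_mul_hammingNorm_traceWord hF h hβ han
    omega
  · have := two_mul_hammingNorm_traceWord_add hF h hβ ha han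
    omega

lemma two_pow_sub_two_pow_mem_Ioo (hs : s ≠ 0) :
    2 ^ (3 * s - 1) - 2 ^ (2 * s - 1) ∈ Set.Ioo 0 (2 ^ (3 * s - 1)) := by
  have hlt : 2 ^ (2 * s - 1) < 2 ^ (3 * s - 1) := Nat.pow_lt_pow_right one_lt_two (by omega)
  exact ⟨Nat.sub_pos_of_lt hlt, Nat.sub_lt (by positivity) (by positivity)⟩

lemma traceWord_injective (hF : Fintype.card F = 2 ^ (4 * s))
    (h : n * (2 ^ s + 1) + 1 = Fintype.card F) (hβ : IsPrimitiveRoot β n) :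
    Function.Injective (traceWord fun i : Fin n ↦ β ^ (i : ℕ)) := by
  refine (injective_iff_map_eq_zero _).2 fun a ha ↦ ?_
  obtain ⟨hpos, hlt⟩ := two_pow_sub_two_pow_mem_Ioo (exponent_ne_zero_of_card_eq hF)
  have hnorm := hammingNorm_traceWord hF h hβ a
  rw [ha, hammingNorm_zero] at hnorm
  split_ifs at hnorm with ha0
  exacts [ha0, absurd hnorm (hpos.trans hlt).ne, absurd hnorm hpos.ne]

lemma finrank_range_traceWord (hF : Fintype.card F = 2 ^ (4 * s))
    (h : n * (2 ^ s + 1) + 1 = Fintype.card F) (hβ : IsPrimitiveRoot β n) :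
    Module.finrank (ZMod 2) (LinearMap.range (traceWord fun i : Fin n ↦ β ^ (i : ℕ))) = 4 * s := by
  have hcard := Module.card_eq_pow_finrank (K := ZMod 2) (V := F)
  rw [hF, ZMod.card] at hcard
  rw [LinearMap.finrank_range_of_inj (traceWord_injective hF h hβ)]
  exact (Nat.pow_right_injective le_rfl hcard).symm

lemma weightCount_range_traceWord_two_pow (hF : Fintype.card F = 2 ^ (4 * s))
    (h : n * (2 ^ s + 1) + 1 = Fintype.card F) (hβ : IsPrimitiveRoot β n) :
    weightCount (LinearMap.range (traceWord fun i : Fin n ↦ β ^ (i : ℕ))) (2 ^ (3 * s - 1)) =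
      n := by
  classical
  have hn := (pos_of_mul_add_one_eq_card h).1
  obtain ⟨hpos, hlt⟩ := two_pow_sub_two_pow_mem_Ioo (exponent_ne_zero_of_card_eq hF)
  rw [weightCount_range (traceWord_injective hF h hβ)]
  refine Eq.trans (congrArg card ?_) (card_nthRootsFinset_one h)
  ext a
  rw [mem_filter_univ, hammingNorm_traceWord hF h hβ, mem_nthRootsFinset hn]
  split_ifs with ha han
  · simp [ha, hn.ne', (hpos.trans hlt).ne]
  · simp [han]
  · simp [han, hlt.ne]

lemma weightCount_range_traceWord_two_pow_sub_two_pow (hF : Fintype.card F = 2 ^ (4 * s))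
    (h : n * (2 ^ s + 1) + 1 = Fintype.card F) (hβ : IsPrimitiveRoot β n) :
    weightCount (LinearMap.range (traceWord fun i : Fin n ↦ β ^ (i : ℕ)))
      (2 ^ (3 * s - 1) - 2 ^ (2 * s - 1)) = 2 ^ (4 * s) - 1 - n := by
  classical
  have hn := (pos_of_mul_add_one_eq_card h).1
  obtain ⟨hpos, hlt⟩ := two_pow_sub_two_pow_mem_Ioo (exponent_ne_zero_of_card_eq hF)
  have zero_notMem : (0 : F) ∉ nthRootsFinset n 1 := by simp [mem_nthRootsFinset hn, hn.ne']
  have card_compl : #(insert 0 (nthRootsFinset n (1 : F)))ᶜ = 2 ^ (4 * s) - 1 - n := by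
    rw [card_compl, card_insert_of_notMem zero_notMem, card_nthRootsFinset_one h, hF]
    omega
  rw [weightCount_range (traceWord_injective hF h hβ), ← card_compl]
  congr 1
  ext a
  rw [mem_filter_univ, hammingNorm_traceWord hF h hβ, mem_compl, mem_insert,
    mem_nthRootsFinset hn]
  split_ifs with ha han
  · simp [ha, hpos.ne]
  · simp [han, hlt.ne']
  · simp [ha, han]

lemma weightCount_range_traceWord_eq_zero (hF : Fintype.card F = 2 ^ (4 * s))
    (h : n * (2 ^ s + 1) + 1 = Fintype.card F) (hβ : IsPrimitiveRoot β n) {w : ℕ} (hw : w ≠ 0)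
    (hw2 : w ≠ 2 ^ (3 * s - 1) - 2 ^ (2 * s - 1)) (hw3 : w ≠ 2 ^ (3 * s - 1)) :
    weightCount (LinearMap.range (traceWord fun i : Fin n ↦ β ^ (i : ℕ))) w = 0 := by
  classical
  rw [weightCount_eq_zero_iff]
  rintro _ ⟨a, rfl⟩
  rw [hammingNorm_traceWord hF h hβ]
  split_ifs
  exacts [hw.symm, hw3.symm, hw2.symm]

lemma minDist_range_traceWord (hF : Fintype.card F = 2 ^ (4 * s))
    (h : n * (2 ^ s + 1) + 1 = Fintype.card F) (hβ : IsPrimitiveRoot β n) :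
    minDist (LinearMap.range (traceWord fun i : Fin n ↦ β ^ (i : ℕ))) =
      2 ^ (3 * s - 1) - 2 ^ (2 * s - 1) := by
  have hn := (pos_of_mul_add_one_eq_card h).1
  obtain ⟨hpos, hlt⟩ := two_pow_sub_two_pow_mem_Ioo (exponent_ne_zero_of_card_eq hF)
  refine minDist_eq_of_weightCount hpos.ne' ?_ fun w hw hwlt ↦
    weightCount_range_traceWord_eq_zero hF h hβ hw hwlt.ne (hwlt.trans hlt).ne
  have : n < n * (2 ^ s + 1) := lt_mul_of_one_lt_right hn (by simp)
  rw [weightCount_range_traceWord_two_pow_sub_two_pow hF h hβ]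
  omega

end TwoWeights

lemma mul_two_pow_add_one_add_one (s : ℕ) :
    (2 ^ (2 * s) + 1) * (2 ^ s - 1) * (2 ^ s + 1) + 1 = 2 ^ (4 * s) := by
  zify [Nat.one_le_two_pow (n := s)]
  rw [pow_mul', pow_mul']
  ring

theorem stmt_2_general {F : Type} [Field F] [Fintype F] [Algebra (ZMod 2) F] (s : ℕ)
    (hF : Fintype.card F = 2 ^ (4 * s)) (n : ℕ) (hn : n = (2 ^ (2 * s) + 1) * (2 ^ s - 1))
    (β : F) (hβ : orderOf β = n)
    (D : Submodule (ZMod 2) (Fin n → ZMod 2)) (hD : D = dualCode (BCHCode n β {1})) :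
    Module.finrank (ZMod 2) D = 4 * s ∧
    minDist D = 2 ^ (3 * s - 1) - 2 ^ (2 * s - 1) ∧
    weightCount D (2 ^ (3 * s - 1) - 2 ^ (2 * s - 1)) = 2 ^ (4 * s) - 1 - n ∧
    weightCount D (2 ^ (3 * s - 1)) = n ∧
    weightCount D 0 = 1 ∧
    ∀ w : ℕ, w ≠ 0 → w ≠ 2 ^ (3 * s - 1) - 2 ^ (2 * s - 1) → w ≠ 2 ^ (3 * s - 1) →
      weightCount D w = 0 := by
  have h : n * (2 ^ s + 1) + 1 = Fintype.card F := by rw [hn, hF, mul_two_pow_add_one_add_one]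
  have hβ' := IsPrimitiveRoot.iff_orderOf.2 hβ
  rw [hD, BCHCode_singleton_one, dualCode_ker_linearCombination]
  exact ⟨finrank_range_traceWord hF h hβ', minDist_range_traceWord hF h hβ',
    weightCount_range_traceWord_two_pow_sub_two_pow hF h hβ',
    weightCount_range_traceWord_two_pow hF h hβ',
    weightCount_zero _, fun w ↦ weightCount_range_traceWord_eq_zero hF h hβ'⟩

lemma orderOf_pow_two_pow_add_one {G : Type*} [Monoid G] {α : G} {s : ℕ}
    (hα : orderOf α = 2 ^ (4 * s) - 1) :
    orderOf (α ^ (2 ^ s + 1)) = (2 ^ (2 * s) + 1) * (2 ^ s - 1) := by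
  rw [← mul_two_pow_add_one_add_one, Nat.add_sub_cancel] at hα
  rw [orderOf_pow_of_dvd (Nat.succ_ne_zero _) (hα ▸ dvd_mul_left _ _), hα,
    Nat.mul_div_cancel _ (Nat.succ_pos _)]

theorem stmt_2 (s : ℕ) (hs : 2 ≤ s) (n : ℕ) (hn : n = (2 ^ (2 * s) + 1) * (2 ^ s - 1))
    (α : GaloisField 2 (4 * s)) (hα : orderOf α = 2 ^ (4 * s) - 1)
    (β : GaloisField 2 (4 * s)) (hβ : β = α ^ (2 ^ s + 1))
    (D : Submodule (ZMod 2) (Fin n → ZMod 2)) (hD : D = dualCode (BCHCode n β {1})) :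
    Module.finrank (ZMod 2) D = 4 * s ∧
    minDist D = 2 ^ (3 * s - 1) - 2 ^ (2 * s - 1) ∧
    weightCount D (2 ^ (3 * s - 1) - 2 ^ (2 * s - 1)) = 2 ^ (4 * s) - 1 - n ∧
    weightCount D (2 ^ (3 * s - 1)) = n ∧
    weightCount D 0 = 1 ∧
    ∀ w : ℕ, w ≠ 0 → w ≠ 2 ^ (3 * s - 1) - 2 ^ (2 * s - 1) → w ≠ 2 ^ (3 * s - 1) →
      weightCount D w = 0 := by
  have := Fintype.ofFinite (GaloisField 2 (4 * s))
  have hcard : Fintype.card (GaloisField 2 (4 * s)) = 2 ^ (4 * s) :=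
    Fintype.card_eq_nat_card.trans (GaloisField.card 2 (4 * s) (by omega))
  exact stmt_2_general s hcard n hn β (by rw [hβ, hn, orderOf_pow_two_pow_add_one hα]) D hD
end

section
/- Let s ≥ 2 and set u = 2^s. The number of codewords of Hamming weight exactly 3 in the code C_{(2,n,3,1)} equals (u−2)(u−1)(u²+1)/6, and in particular this number is positive. -/
open Finset

/-!
Identify a word of length `n` with the set of `n`-th roots of unity `β ^ i` at its nonzero
positions; the codewords of weight three become the three-element sets of `n`-th roots of unity
with sum zero. In characteristic two these are the sets `{x, y, x + y}`, each arising from six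
ordered pairs, and scaling by `x⁻¹` reduces the count of pairs to that of the `n`-th roots of
unity `a` such that `a + 1` is one as well.

Put `q = 2 ^ s` and `φ x = x ^ q`. As `n = (q² + 1)(q - 1)`, an `n`-th root of unity satisfies
`φ³ y * φ y = φ² y * y`. For `y = a` and `y = a + 1` this says that the pairs `{φ³ a, φ a}` and
`{φ² a, a}` have the same product and the same sum, so they agree, and either alternative gives
`φ a = a`. The admissible `a` are thus the `q - 2` elements of `𝔽_q` other than `0` and `1`.
-/

open Polynomial (nthRootsFinset mem_nthRootsFinset ne_zero_of_mem_nthRootsFinset)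

section BinaryWords

variable {ι : Type*}

theorem indicator_support_one (c : ι → ZMod 2) : (Function.support c).indicator 1 = c := by
  have eq_one_of_ne_zero : ∀ a : ZMod 2, a ≠ 0 → a = 1 := by decide
  ext i
  by_cases hi : c i = 0
  · simp [hi]
  · simp [eq_one_of_ne_zero _ hi]

theorem hammingNorm_indicator_one [Fintype ι] (S : Finset ι) :
    hammingNorm ((S : Set ι).indicator (1 : ι → ZMod 2)) = #S := by
  classical
  simp [hammingNorm, Set.indicator_apply]

theorem weightCount_eq_ncard_indicator {N : ℕ} (C : Submodule (ZMod 2) (Fin N → ZMod 2)) (w : ℕ) :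
    weightCount C w = {S : Finset (Fin N) | #S = w ∧ (S : Set (Fin N)).indicator 1 ∈ C}.ncard := by
  have indicator_injective : Function.Injective
      fun S : Finset (Fin N) ↦ (S : Set (Fin N)).indicator (1 : Fin N → ZMod 2) :=
    fun S T h ↦ coe_injective (Set.indicator_one_inj (ZMod 2) h)
  rw [weightCount, ← Set.ncard_image_of_injective _ indicator_injective]
  congr 1
  ext c
  constructor
  · rintro ⟨hc, hw⟩
    obtain ⟨S, hS⟩ := (Set.toFinite (Function.support c)).exists_finset_coe
    obtain rfl : (S : Set (Fin N)).indicator 1 = c := by rw [hS, indicator_support_one]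
    exact ⟨S, ⟨by rwa [hammingNorm_indicator_one] at hw, hc⟩, rfl⟩
  · rintro ⟨S, ⟨rfl, hS⟩, rfl⟩
    exact ⟨hS, hammingNorm_indicator_one S⟩

end BinaryWords

section RootsOfUnity

/-- The powers `ζ ^ i`, `i < n`, of a primitive `n`-th root of unity as distinct elements. It
carries a set of positions of a word of length `n` to a set of roots of unity. -/
@[simps]
def primitiveRootPow {M : Type*} [CommMonoid M] {n : ℕ} {ζ : M} (hζ : IsPrimitiveRoot ζ n) :
    Fin n ↪ M where
  toFun i := ζ ^ (i : ℕ)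
  inj' i j h := Fin.ext (hζ.pow_inj i.2 j.2 h)

theorem isPrimitiveRoot_pow_add_one {M : Type*} [CommMonoid M] {α : M} {q : ℕ} (hq : 1 < q)
    (hα : orderOf α = q ^ 4 - 1) : IsPrimitiveRoot (α ^ (q + 1)) ((q ^ 2 + 1) * (q - 1)) := by
  have factorization : q ^ 4 - 1 = (q + 1) * ((q ^ 2 + 1) * (q - 1)) := by
    obtain ⟨r, rfl⟩ := Nat.exists_eq_add_one_of_ne_zero (by lia : q ≠ 0)
    rw [Nat.add_sub_cancel]
    exact Nat.sub_eq_of_eq_add (by ring)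
  refine (IsPrimitiveRoot.orderOf α).pow ?_ (hα.trans factorization)
  rw [hα]
  exact Nat.sub_pos_of_lt (Nat.one_lt_pow (by norm_num) hq)

variable {R : Type*} [CommRing R] [IsDomain R] {n : ℕ}

theorem map_primitiveRootPow_univ [NeZero n] {ζ : R} (hζ : IsPrimitiveRoot ζ n) :
    univ.map (primitiveRootPow hζ) = nthRootsFinset n (1 : R) := by
  ext x
  simp only [mem_map, mem_univ, true_and, primitiveRootPow_apply, mem_nthRootsFinset (NeZero.pos n)]
  constructor
  · rintro ⟨i, rfl⟩
    rw [pow_right_comm, hζ.pow_eq_one, one_pow]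
  · intro hx
    obtain ⟨i, hi, rfl⟩ := hζ.eq_pow_of_pow_eq_one hx
    exact ⟨⟨i, hi⟩, rfl⟩

theorem isUnit_of_mem_nthRootsFinset_one {x : R} (hx : x ∈ nthRootsFinset n 1) : IsUnit x := by
  rcases n.eq_zero_or_pos with rfl | hn
  · simp at hx
  · exact .of_pow_eq_one ((mem_nthRootsFinset hn 1).1 hx) hn.ne'

theorem mul_mem_nthRootsFinset_one_iff {x y : R} (hx : x ∈ nthRootsFinset n 1) :
    x * y ∈ nthRootsFinset n 1 ↔ y ∈ nthRootsFinset n 1 := by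
  rcases n.eq_zero_or_pos with rfl | hn
  · simp at hx
  · rw [mem_nthRootsFinset hn] at hx
    simp only [mem_nthRootsFinset hn, mul_pow, hx, one_mul]

variable [DecidableEq R]

theorem card_add_mem_nthRootsFinset_one {x : R} (hx : x ∈ nthRootsFinset n 1) :
    #{y ∈ nthRootsFinset n (1 : R) | x + y ∈ nthRootsFinset n (1 : R)} =
      #{a ∈ nthRootsFinset n (1 : R) | a + 1 ∈ nthRootsFinset n (1 : R)} := by
  symm
  refine card_bijective (x * ·)
    (IsUnit.isUnit_iff_mulLeft_bijective.1 (isUnit_of_mem_nthRootsFinset_one hx)) fun a ↦ ?_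
  have factor_out : x + x * a = x * (a + 1) := by ring
  simp only [mem_filter, factor_out, mul_mem_nthRootsFinset_one_iff hx]

theorem card_product_add_mem_nthRootsFinset_one :
    #{p ∈ nthRootsFinset n (1 : R) ×ˢ nthRootsFinset n (1 : R) |
        p.1 + p.2 ∈ nthRootsFinset n (1 : R)} =
      #(nthRootsFinset n (1 : R)) *
        #{a ∈ nthRootsFinset n (1 : R) | a + 1 ∈ nthRootsFinset n (1 : R)} := by
  rw [card_filter, sum_product]
  simp only [← card_filter]
  exact sum_const_nat fun x hx ↦ card_add_mem_nthRootsFinset_one hx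

end RootsOfUnity

section BCHCode

variable {F : Type} [Field F] [Algebra (ZMod 2) F] {n : ℕ} {β : F} {J : Finset ℕ}

theorem indicator_one_mem_BCHCode_iff {S : Finset (Fin n)} :
    (S : Set (Fin n)).indicator 1 ∈ BCHCode n β J ↔
      ∀ j ∈ J, ∑ i ∈ S, (β ^ (i : ℕ)) ^ j = 0 := by
  classical
  refine forall₂_congr fun j _ ↦ ?_
  simp [Set.indicator_apply, ite_smul, ← pow_mul, mul_comm j]

theorem weightCount_BCHCode [DecidableEq F] [NeZero n] (hβ : IsPrimitiveRoot β n) (w : ℕ) :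
    weightCount (BCHCode n β J) w =
      #{T ∈ (nthRootsFinset n (1 : F)).powersetCard w | ∀ j ∈ J, ∑ x ∈ T, x ^ j = 0} := by
  rw [weightCount_eq_ncard_indicator, ← map_primitiveRootPow_univ hβ, powersetCard_map,
    filter_map, card_map, ← Set.ncard_coe_finset]
  congr 1
  ext S
  simp [indicator_one_mem_BCHCode_iff, mem_powersetCard]

end BCHCode

section ZeroSumTriples

variable {V : Type*} [AddCommGroup V] [Module (ZMod 2) V] {x y : V}

theorem ne_of_add_ne_zero (hxy : x + y ≠ 0) : x ≠ y := by
  rintro rfl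
  exact hxy (ZModModule.add_self x)

variable [DecidableEq V]

theorem card_insert_insert_add (hx : x ≠ 0) (hy : y ≠ 0) (hxy : x + y ≠ 0) :
    #{x, y, x + y} = 3 :=
  card_eq_three.2 ⟨x, y, x + y, ne_of_add_ne_zero hxy, by simpa using hy, by simpa using hx, rfl⟩

theorem sum_insert_insert_add (hx : x ≠ 0) (hy : y ≠ 0) (hxy : x + y ≠ 0) :
    ∑ z ∈ {x, y, x + y}, z = 0 := by
  rw [sum_insert (by simp [ne_of_add_ne_zero hxy, hy]), sum_pair (by simpa using hx), ← add_assoc,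
    ZModModule.add_self]

theorem insert_insert_add_eq_of_sum_eq_zero {T : Finset V} (hT : #T = 3) (hsum : ∑ z ∈ T, z = 0)
    (hx : x ∈ T) (hy : y ∈ T) (hxy : x ≠ y) : {x, y, x + y} = T := by
  have hyT : y ∈ T.erase x := mem_erase.2 ⟨hxy.symm, hy⟩
  obtain ⟨z, hz⟩ : ∃ z, (T.erase x).erase y = {z} := by
    rw [← card_eq_one, card_erase_of_mem hyT, card_erase_of_mem hx, hT]
  have hxyz : x + y + z = 0 := by
    rw [← hsum, ← add_sum_erase T _ hx, ← add_sum_erase _ _ hyT, hz, sum_singleton, add_assoc]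
  have hz_eq : x + y = z := by
    rw [eq_neg_of_add_eq_zero_left hxyz, ZModModule.neg_eq_self]
  rw [hz_eq, ← hz, insert_erase hyT, insert_erase hx]

theorem insert_insert_add_eq_iff_mem_offDiag {T : Finset V} (hT : #T = 3)
    (hsum : ∑ z ∈ T, z = 0) : {x, y, x + y} = T ↔ (x, y) ∈ T.offDiag := by
  rw [mem_offDiag]
  constructor
  · rintro rfl
    refine ⟨by simp, by simp, ?_⟩
    intro (hxy : x = y)
    subst hxy
    have := card_le_two (a := x) (b := x + x)
    rw [insert_eq_of_mem (mem_insert_self _ _)] at hT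
    lia
  · rintro ⟨hx, hy, hxy⟩
    exact insert_insert_add_eq_of_sum_eq_zero hT hsum hx hy hxy

theorem card_add_mem_eq_six_mul_card_sum_eq_zero {U : Finset V} (hU : 0 ∉ U) :
    #{p ∈ U ×ˢ U | p.1 + p.2 ∈ U} = 6 * #{T ∈ U.powersetCard 3 | ∑ z ∈ T, z = 0} := by
  have ne_zero : ∀ {x}, x ∈ U → x ≠ 0 := fun hx ↦ ne_of_mem_of_not_mem hx hU
  have mapsTo : ∀ p ∈ {p ∈ U ×ˢ U | p.1 + p.2 ∈ U},
      {p.1, p.2, p.1 + p.2} ∈ {T ∈ U.powersetCard 3 | ∑ z ∈ T, z = 0} := by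
    rintro ⟨x, y⟩ hp
    simp only [mem_filter, mem_product] at hp
    obtain ⟨⟨hx, hy⟩, hxy⟩ := hp
    refine mem_filter.2 ⟨mem_powersetCard.2 ⟨by grind, ?_⟩, ?_⟩
    · exact card_insert_insert_add (ne_zero hx) (ne_zero hy) (ne_zero hxy)
    · exact sum_insert_insert_add (ne_zero hx) (ne_zero hy) (ne_zero hxy)
  rw [card_eq_sum_card_fiberwise mapsTo, sum_const_nat (m := 6), mul_comm]
  intro T hT
  obtain ⟨⟨hTU, hT3⟩, hsum⟩ := by simpa only [mem_filter, mem_powersetCard] using hT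
  have fiber_eq : {p ∈ {p ∈ U ×ˢ U | p.1 + p.2 ∈ U} | {p.1, p.2, p.1 + p.2} = T} = T.offDiag := by
    ext ⟨x, y⟩
    rw [mem_filter, insert_insert_add_eq_iff_mem_offDiag hT3 hsum, and_iff_right_iff_imp,
      ← insert_insert_add_eq_iff_mem_offDiag hT3 hsum]
    rintro rfl
    simp only [mem_filter, mem_product]
    exact ⟨⟨hTU (by simp), hTU (by simp)⟩, hTU (by simp)⟩
  rw [fiber_eq, offDiag_card, hT3]

end ZeroSumTriples

section Frobenius

theorem map_eq_self_of_map_map_map_mul_map_eq {R : Type*} [CommRing R] [NoZeroDivisors R]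
    {φ : R →+* R} (hφ : Function.Injective φ) {x : R}
    (hx : φ (φ (φ x)) * φ x = φ (φ x) * x)
    (hx' : φ (φ (φ (x + 1))) * φ (x + 1) = φ (φ (x + 1)) * (x + 1)) : φ x = x := by
  simp only [map_add, map_one] at hx'
  have hsum : φ (φ (φ x)) + φ x = φ (φ x) + x := by linear_combination hx' - hx
  have hprod : (φ x - x) * (φ (φ x) - φ x) = 0 := by linear_combination hx - φ x * hsum
  rcases mul_eq_zero.1 hprod with h | h
  · exact sub_eq_zero.1 h
  · exact hφ (sub_eq_zero.1 h)

theorem sq_add_one_mul_sub_one_add {q : ℕ} (hq : 0 < q) :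
    (q ^ 2 + 1) * (q - 1) + (q ^ 2 + 1) = q ^ 3 + q := by
  obtain ⟨r, rfl⟩ := Nat.exists_eq_add_one_of_ne_zero hq.ne'
  rw [Nat.add_sub_cancel]
  ring

theorem pow_sub_one_eq_one_iff {M₀ : Type*} [MonoidWithZero M₀] [Nontrivial M₀]
    [IsRightCancelMulZero M₀] {q : ℕ} (hq : 1 < q) {x : M₀} :
    x ^ (q - 1) = 1 ↔ x ^ q = x ∧ x ≠ 0 := by
  rcases eq_or_ne x 0 with rfl | hx
  · simp [Nat.sub_ne_zero_of_lt hq]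
  · rw [← pow_sub_one_mul (n := q) (by lia) x, mul_eq_right₀ hx, and_iff_left hx]

variable {R : Type*} [CommRing R] [IsDomain R] {p s : ℕ} [Fact p.Prime] [CharP R p]

theorem pow_eq_self_of_pow_eq_one_of_add_one_pow_eq_one {x : R}
    (hx : x ^ (((p ^ s) ^ 2 + 1) * (p ^ s - 1)) = 1)
    (hx' : (x + 1) ^ (((p ^ s) ^ 2 + 1) * (p ^ s - 1)) = 1) : x ^ p ^ s = x := by
  have hq : 0 < p ^ s := pow_pos (Fact.out : p.Prime).pos s
  have frobenius_relation {y : R} (hy : y ^ (((p ^ s) ^ 2 + 1) * (p ^ s - 1)) = 1) :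
      ((y ^ p ^ s) ^ p ^ s) ^ p ^ s * y ^ p ^ s = (y ^ p ^ s) ^ p ^ s * y := by
    calc ((y ^ p ^ s) ^ p ^ s) ^ p ^ s * y ^ p ^ s = y ^ ((p ^ s) ^ 3 + p ^ s) := by ring
      _ = y ^ ((p ^ s) ^ 2 + 1) := by
        rw [← sq_add_one_mul_sub_one_add hq, pow_add, hy, one_mul]
      _ = (y ^ p ^ s) ^ p ^ s * y := by ring
  exact map_eq_self_of_map_map_map_mul_map_eq (iterateFrobenius_inj R p s)
    (frobenius_relation hx) (frobenius_relation hx')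

theorem pow_eq_one_and_add_one_pow_eq_one_iff (hs : s ≠ 0) {x : R} :
    x ^ (((p ^ s) ^ 2 + 1) * (p ^ s - 1)) = 1 ∧ (x + 1) ^ (((p ^ s) ^ 2 + 1) * (p ^ s - 1)) = 1 ↔
      x ^ (p ^ s - 1) = 1 ∧ x ≠ -1 := by
  have hq : 1 < p ^ s := Nat.one_lt_pow hs (Fact.out : p.Prime).one_lt
  have hn : ((p ^ s) ^ 2 + 1) * (p ^ s - 1) ≠ 0 := by positivity [Nat.sub_pos_of_lt hq]
  constructor
  · rintro ⟨hx, hx'⟩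
    refine ⟨(pow_sub_one_eq_one_iff hq).2
      ⟨pow_eq_self_of_pow_eq_one_of_add_one_pow_eq_one hx hx', ?_⟩, ?_⟩
    · rintro rfl
      simp [hn] at hx
    · rintro rfl
      simp [hn] at hx'
  · rintro ⟨hx, hx1⟩
    have hx' : (x + 1) ^ (p ^ s - 1) = 1 := by
      rw [pow_sub_one_eq_one_iff hq, add_pow_char_pow, one_pow,
        ((pow_sub_one_eq_one_iff hq).1 hx).1]
      exact ⟨rfl, fun h ↦ hx1 (eq_neg_of_add_eq_zero_left h)⟩
    exact ⟨by rw [pow_mul', hx, one_pow], by rw [pow_mul', hx', one_pow]⟩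

theorem card_add_one_mem_nthRootsFinset_one [DecidableEq R] (hs : s ≠ 0) {n : ℕ}
    (hn : n = ((p ^ s) ^ 2 + 1) * (p ^ s - 1)) {ζ : R} (hζ : IsPrimitiveRoot ζ n) :
    #{a ∈ nthRootsFinset n (1 : R) | a + 1 ∈ nthRootsFinset n (1 : R)} = p ^ s - 2 := by
  have hq : 1 < p ^ s := Nat.one_lt_pow hs (Fact.out : p.Prime).one_lt
  have hq1 : 0 < p ^ s - 1 := Nat.sub_pos_of_lt hq
  have hn0 : 0 < n := by rw [hn]; positivity
  have neg_one_mem : -1 ∈ nthRootsFinset (p ^ s - 1) (1 : R) := by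
    rw [mem_nthRootsFinset hq1, pow_sub_one_eq_one_iff hq]
    exact ⟨neg_one_pow_char_pow R p s, neg_ne_zero.2 one_ne_zero⟩
  have filter_eq : {a ∈ nthRootsFinset n (1 : R) | a + 1 ∈ nthRootsFinset n (1 : R)} =
      (nthRootsFinset (p ^ s - 1) (1 : R)).erase (-1) := by
    ext a
    rw [mem_filter, mem_erase, mem_nthRootsFinset hn0, mem_nthRootsFinset hn0,
      mem_nthRootsFinset hq1, hn, pow_eq_one_and_add_one_pow_eq_one_iff hs, and_comm]
  rw [filter_eq, card_erase_of_mem neg_one_mem, (hζ.pow hn0 hn).card_nthRootsFinset, Nat.sub_sub]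

end Frobenius

theorem stmt_3_general {F : Type} [Field F] [Algebra (ZMod 2) F] {s : ℕ} (hs : 2 ≤ s) {n : ℕ}
    (hn : n = ((2 ^ s) ^ 2 + 1) * (2 ^ s - 1)) {β : F} (hβ : IsPrimitiveRoot β n) :
    6 * weightCount (BCHCode n β {1}) 3 = (2 ^ s - 2) * (2 ^ s - 1) * ((2 ^ s) ^ 2 + 1) ∧
      0 < weightCount (BCHCode n β {1}) 3 := by
  classical
  have hu : 2 ^ 2 ≤ 2 ^ s := Nat.pow_le_pow_right two_pos hs
  have hu1 : 0 < 2 ^ s - 1 := by lia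
  have hu2 : 0 < 2 ^ s - 2 := by lia
  have : NeZero n := ⟨by rw [hn]; positivity⟩
  have : CharP F 2 := charP_of_injective_algebraMap (algebraMap (ZMod 2) F).injective 2
  have zero_notMem : 0 ∉ nthRootsFinset n (1 : F) :=
    fun h ↦ ne_zero_of_mem_nthRootsFinset one_ne_zero h rfl
  have count : 6 * weightCount (BCHCode n β {1}) 3 =
      (2 ^ s - 2) * (2 ^ s - 1) * ((2 ^ s) ^ 2 + 1) := by
    calc 6 * weightCount (BCHCode n β {1}) 3
      _ = 6 * #{T ∈ (nthRootsFinset n (1 : F)).powersetCard 3 | ∑ x ∈ T, x = 0} := by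
        simp [weightCount_BCHCode hβ]
      _ = #{p ∈ nthRootsFinset n (1 : F) ×ˢ nthRootsFinset n (1 : F) |
            p.1 + p.2 ∈ nthRootsFinset n (1 : F)} :=
        (card_add_mem_eq_six_mul_card_sum_eq_zero zero_notMem).symm
      _ = n * (2 ^ s - 2) := by
        rw [card_product_add_mem_nthRootsFinset_one, hβ.card_nthRootsFinset,
          card_add_one_mem_nthRootsFinset_one (by lia) hn hβ]
      _ = (2 ^ s - 2) * (2 ^ s - 1) * ((2 ^ s) ^ 2 + 1) := by rw [hn]; ring
  have count_pos : 0 < 6 * weightCount (BCHCode n β {1}) 3 := by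
    rw [count]
    positivity
  exact ⟨count, Nat.pos_of_mul_pos_left count_pos⟩

theorem stmt_3 (s : ℕ) (hs : 2 ≤ s) (n : ℕ) (hn : n = (2 ^ (2 * s) + 1) * (2 ^ s - 1))
    (α : GaloisField 2 (4 * s)) (hα : orderOf α = 2 ^ (4 * s) - 1)
    (β : GaloisField 2 (4 * s)) (hβ : β = α ^ (2 ^ s + 1)) :
    6 * weightCount (BCHCode n β {1}) 3 = (2 ^ s - 2) * (2 ^ s - 1) * ((2 ^ s) ^ 2 + 1) ∧
    0 < weightCount (BCHCode n β {1}) 3 := by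
  rw [pow_mul'] at hn hα
  exact stmt_3_general hs hn
    (hn ▸ hβ ▸ isPrimitiveRoot_pow_add_one (Nat.one_lt_two_pow (by lia)) hα)
end
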